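/- Let f : ℂ × ℂⁿ → ℂ be a polynomial and suppose the t-axis satisfies Thom's a_f condition at the origin with respect to the ambient stratum: for every sequence p_k ∈ ℂ×ℂⁿ with ∇f(p_k) ≠ 0, p_k → (0,0), and ∇f(p_k)/‖∇f(p_k)‖ → v for some v ∈ ℂ^{1+n}, the first (t-)component of v is zero. Then for every holomorphic curve γ : (ℂ,0) → (ℂ × ℂⁿ, (0,0)), i.e., a map holomorphic on a neighbourhood of 0 in ℂ with γ(0) = (0,0), whose image is not contained in the critical set Σf = {∇f = 0} on any neighbourhood of 0, one has ord₀((∂f/∂t)∘γ) > min_{1≤j≤n} ord₀((∂f/∂z_j)∘γ). -/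

import Mathlib

/-!
Write `g i := (∂f/∂x_i) ∘ γ`, a function holomorphic near `0`, with `i = 0` for the `t`-derivative.
If the inequality fails, then `m := ord₀ (g 0)` is at most every `ord₀ (g i)`, and `m` is finite
because `γ` does not stay in the critical set. Hence `g i = u ^ m * h i` near `0` with `h i`
holomorphic and `h 0 0 ≠ 0`. Along the positive reals `u ^ m` is a positive scalar, so it drops out
of the normalized gradient, which therefore converges to `h(0) / ‖h(0)‖` as `u = 1 / (k + 1) → 0`.
The first component of this limit is nonzero, contradicting Thom's condition.
-/

/-- The gradient `∇f = (∂f/∂t, ∂f/∂z_1, …, ∂f/∂z_n)` of `f ∈ ℂ[t,z_1,…,z_n]`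
(variable `0` playing the role of `t`) evaluated at a point `(t,z) ∈ ℂ × ℂⁿ`. -/
noncomputable def gradEval {n : ℕ} (f : MvPolynomial (Fin (n + 1)) ℂ)
    (q : ℂ × (Fin n → ℂ)) : Fin (n + 1) → ℂ :=
  fun i => MvPolynomial.eval (Fin.cons q.1 q.2) (MvPolynomial.pderiv i f)

/-- The vanishing order at `0` of a function `ψ : ℂ → ℂ` (holomorphic near `0`):
the least `k` such that the `k`-th derivative of `ψ` at `0` is nonzero, with the
convention `ord₀ ψ = ∞` if no such `k` exists (i.e. `ψ ≡ 0` near `0`). -/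
noncomputable def ordAt (ψ : ℂ → ℂ) : ℕ∞ :=
  sInf ((fun k : ℕ => (k : ℕ∞)) '' {k : ℕ | iteratedDeriv k ψ 0 ≠ 0})

/-- For analytic germs, `ordAt` agrees with Mathlib's `analyticOrderAt`. -/
lemma ordAt_eq_analyticOrderAt {ψ : ℂ → ℂ} (hψ : AnalyticAt ℂ ψ 0) :
    ordAt ψ = analyticOrderAt ψ 0 := by
  refine ENat.eq_of_forall_natCast_le_iff fun m => ?_
  rw [natCast_le_analyticOrderAt_iff_iteratedDeriv_eq_zero hψ, ordAt, le_sInf_iff]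
  constructor
  · intro H i hi
    by_contra hne
    have := H _ ⟨i, hne, rfl⟩
    exact absurd (Nat.cast_le.mp this) (not_le.mpr hi)
  · rintro H _ ⟨i, hi, rfl⟩
    exact Nat.cast_le.mpr (not_lt.mp fun hlt => hi (H i hlt))

lemma analyticAt_gradEval_comp {n : ℕ} (f : MvPolynomial (Fin (n + 1)) ℂ)
    {γ : ℂ → ℂ × (Fin n → ℂ)} {u : ℂ} (hγ : AnalyticAt ℂ γ u) (i : Fin (n + 1)) :
    AnalyticAt ℂ (fun u => gradEval f (γ u) i) u := by
  have hc : ∀ j : Fin (n + 1),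
      AnalyticAt ℂ (fun u => (Fin.cons (γ u).1 (γ u).2 : Fin (n + 1) → ℂ) j) u := by
    intro j
    refine Fin.cases ?_ (fun j => ?_) j
    · have h1 : AnalyticAt ℂ (fun u => (γ u).1) u := analyticAt_fst.comp hγ
      simpa using h1
    · have h2 : AnalyticAt ℂ (fun u => (γ u).2) u := analyticAt_snd.comp hγ
      simpa using analyticAt_pi_iff.mp h2 j
  exact AnalyticAt.aeval_mvPolynomial hc (MvPolynomial.pderiv i f)

/-- Normalizing a vector is unaffected by a positive scalar. -/
lemma inv_norm_smul_pos_smul {E : Type*} [NormedAddCommGroup E] [NormedSpace ℝ E]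
    {r : ℝ} (hr : 0 < r) (x : E) : ‖r • x‖⁻¹ • (r • x) = ‖x‖⁻¹ • x := by
  rw [norm_smul, Real.norm_of_nonneg hr.le, smul_smul]
  congr 1
  field_simp

/-- **Curve criterion (inequality (2.1)).** If the `t`-axis satisfies Thom's `a_f`
condition at the origin with respect to the ambient stratum, then for every
holomorphic curve `γ : (ℂ,0) → (ℂ×ℂⁿ,(0,0))` whose image is not contained in `Σf`
on any neighbourhood of `0`, one has
`ord₀((∂f/∂t)∘γ) > min_{1≤j≤n} ord₀((∂f/∂z_j)∘γ)`. -/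
theorem curve_criterion_of_thom
    (n : ℕ) (f : MvPolynomial (Fin (n + 1)) ℂ)
    (hthom : ∀ (p : ℕ → ℂ × (Fin n → ℂ)) (v : Fin (n + 1) → ℂ),
      (∀ k, gradEval f (p k) ≠ 0) →
      Filter.Tendsto p Filter.atTop (nhds (0, 0)) →
      Filter.Tendsto (fun k => (‖gradEval f (p k)‖)⁻¹ • gradEval f (p k))
        Filter.atTop (nhds v) →
      v 0 = 0)
    (γ : ℂ → ℂ × (Fin n → ℂ))
    (hγhol : ∃ U ∈ nhds (0 : ℂ), DifferentiableOn ℂ γ U)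
    (hγ0 : γ 0 = (0, 0))
    (hγSigma : ∀ U ∈ nhds (0 : ℂ), ∃ u ∈ U, gradEval f (γ u) ≠ 0) :
    Finset.univ.inf (fun j : Fin n => ordAt
        (fun u => MvPolynomial.eval (Fin.cons (γ u).1 (γ u).2)
          (MvPolynomial.pderiv j.succ f))) <
      ordAt (fun u => MvPolynomial.eval (Fin.cons (γ u).1 (γ u).2)
        (MvPolynomial.pderiv 0 f)) := by
  obtain ⟨U, hU, hdiff⟩ := hγhol
  have hγan : AnalyticAt ℂ γ 0 := hdiff.analyticAt hU
  have hg := analyticAt_gradEval_comp f hγan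
  change Finset.univ.inf (fun j : Fin n => ordAt (fun u => gradEval f (γ u) j.succ)) <
    ordAt (fun u => gradEval f (γ u) 0)
  simp only [ordAt_eq_analyticOrderAt (hg _)]
  by_contra hlt
  have hle : ∀ i, analyticOrderAt (fun u => gradEval f (γ u) 0) 0 ≤
      analyticOrderAt (fun u => gradEval f (γ u) i) 0 := by
    intro i
    refine Fin.cases le_rfl (fun j => ?_) i
    exact (not_lt.mp hlt).trans (Finset.inf_le (Finset.mem_univ j))
  have hfin : analyticOrderAt (fun u => gradEval f (γ u) 0) 0 ≠ ⊤ := by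
    intro htop
    have hz : ∀ᶠ u in nhds (0 : ℂ), ∀ i, gradEval f (γ u) i = 0 :=
      Filter.eventually_all.mpr fun i =>
        analyticOrderAt_eq_top.mp (top_le_iff.mp (htop ▸ hle i))
    obtain ⟨u, hu, hne⟩ := hγSigma _ hz
    exact hne (funext hu)
  obtain ⟨m, hm⟩ := ENat.ne_top_iff_exists.mp hfin
  have hfac : ∀ i, ∃ h : ℂ → ℂ, AnalyticAt ℂ h 0 ∧ (i = 0 → h 0 ≠ 0) ∧
      ∀ᶠ u in nhds (0 : ℂ), gradEval f (γ u) i = (u - 0) ^ m • h u := by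
    intro i
    by_cases hi : i = 0
    · subst hi
      obtain ⟨h, h1, h2, h3⟩ := (hg 0).analyticOrderAt_eq_natCast.mp hm.symm
      exact ⟨h, h1, fun _ => h2, h3⟩
    · obtain ⟨h, h1, h3⟩ := (natCast_le_analyticOrderAt (hg i)).mp (hm.trans_le (hle i))
      exact ⟨h, h1, fun h0 => absurd h0 hi, h3⟩
  choose h han hne hev using hfac
  let H : ℂ → Fin (n + 1) → ℂ := fun u i => h i u
  have hHcont : ContinuousAt H 0 := continuousAt_pi.mpr fun i => (han i).continuousAt
  have hH0 : H 0 0 ≠ 0 := hne 0 rfl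
  have hH : H 0 ≠ 0 := fun hz => hH0 (congrFun hz 0)
  let w : ℕ → ℂ := fun k => ((1 / ((k : ℝ) + 1) : ℝ) : ℂ)
  have hw : Filter.Tendsto w Filter.atTop (nhds 0) := by
    have := (Complex.continuous_ofReal.tendsto 0).comp
      (tendsto_one_div_add_atTop_nhds_zero_nat (𝕜 := ℝ))
    simpa [w, Function.comp_def] using this
  have hgood : ∀ᶠ u in nhds (0 : ℂ), H u ≠ 0 ∧ ∀ i, gradEval f (γ u) i = (u - 0) ^ m • h i u :=
    (hHcont.eventually_ne hH).and (Filter.eventually_all.mpr hev)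
  obtain ⟨K, hK⟩ := Filter.eventually_atTop.mp (hw.eventually hgood)
  have hshift := hw.comp (Filter.tendsto_add_atTop_nat K)
  -- At the real points `w k` the common factor `u ^ m` is a positive real scalar.
  have hpos : ∀ k : ℕ, 0 < (1 / ((k : ℝ) + 1)) ^ m := fun k => by positivity
  have hgrad : ∀ k, gradEval f (γ (w (k + K))) =
      (1 / (((k + K : ℕ) : ℝ) + 1)) ^ m • H (w (k + K)) := by
    intro k
    funext i
    rw [(hK (k + K) (Nat.le_add_left _ _)).2 i, Pi.smul_apply, Complex.real_smul]
    simp [w, H]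
  have hv := hthom (fun k => γ (w (k + K))) (‖H 0‖⁻¹ • H 0) ?_ ?_ ?_
  · rw [Pi.smul_apply, smul_eq_zero] at hv
    rcases hv with hv | hv
    · exact inv_ne_zero (norm_ne_zero_iff.mpr hH) hv
    · exact hH0 hv
  · intro k
    rw [hgrad]
    exact smul_ne_zero (hpos _).ne' (hK (k + K) (Nat.le_add_left _ _)).1
  · rw [← hγ0]
    exact hγan.continuousAt.tendsto.comp hshift
  · simp only [hgrad, inv_norm_smul_pos_smul (hpos _)]
    have hc : Filter.Tendsto (fun u => ‖H u‖⁻¹ • H u) (nhds 0) (nhds (‖H 0‖⁻¹ • H 0)) :=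
      (hHcont.norm.inv₀ (norm_ne_zero_iff.mpr hH)).smul hHcont
    exact hc.comp hshift
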